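/- Let F := RatFunc ℂ with the involution ~ defined on polynomials by p~(X) := conj-coefficients of p composed with −X (so that p~(s) = conj(p(−conj s)) for all s) and extended to F by (p/q)~ := p~/q~; for a matrix Γ over F let Γ~ denote the transpose of the entrywise application of ~ (so Γ~(s) = (Γ(−conj s))ᴴ). Let RH∞ ⊂ F be the subring of proper stable rational functions, J the 2μ×2μ signature matrix [[I_μ, 0],[0, −I_μ]] regarded as a constant matrix over F, and let P be a 2μ×2μ matrix over F with a doubly coprime factorization M, N, U, V, M̂, N̂, Û, V̂ over RH∞ satisfying the general Bézout identity [[V̂, −Û],[−N̂, M̂]]·[[M, U],[N, V]] = I. Define Φ := U~JU − V~JV, Λ := M~JU − N~JV, Π := M~JM − N~JN. Then the set of all 2μ×2μ matrices K over F that (i) internally stabilize P (the matrix [[I, −K],[−P, I]] is invertible over F with inverse entries in RH∞), (ii) are (J,J)-unitary (K~ J K = J as matrices over F), and (iii) have all entries proper with det(V+NQ) having a nonzero finite value at infinity, coincides with the set of matrices K = (U + MQ)(V + NQ)⁻¹, where Q ranges over all 2μ×2μ matrices with entries in RH∞ such that V + NQ is invertible over F, det(V + NQ) has numerator and denominator of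 equal degree (so its value at infinity is nonzero), and Φ + Q~Λ + Λ~Q + Q~ΠQ = 0. -/

import Mathlib

open Matrix Polynomial

/-- A rational function belongs to `RH∞` (proper stable rational functions). -/
def IsRHInf (f : RatFunc ℂ) : Prop :=
  f = 0 ∨ ((∀ z : ℂ, f.denom.IsRoot z → z.re < 0) ∧ f.num.degree ≤ f.denom.degree)

/-- A rational function is proper: numerator degree ≤ denominator degree. -/
def IsProper (f : RatFunc ℂ) : Prop :=
  f.num.degree ≤ f.denom.degree

/-- The involution `~` on polynomials: `p~(s) = conj (p (-conj s))`, i.e., the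
conjugate-coefficient polynomial composed with `-X`. -/
noncomputable def polyTilde (p : Polynomial ℂ) : Polynomial ℂ :=
  (p.map (starRingEnd ℂ)).comp (-Polynomial.X)

/-- The involution `~` on rational functions, `(p/q)~ = p~/q~`. -/
noncomputable def ratTilde (f : RatFunc ℂ) : RatFunc ℂ :=
  algebraMap (Polynomial ℂ) (RatFunc ℂ) (polyTilde f.num) /
    algebraMap (Polynomial ℂ) (RatFunc ℂ) (polyTilde f.denom)

/-- The conjugate transfer matrix over rational functions: transpose of the
entrywise involution, so that `Γ~(s) = (Γ(-conj s))ᴴ`. -/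
noncomputable def matConjTransfer {α β : Type*}
    (Γ : Matrix α β (RatFunc ℂ)) : Matrix β α (RatFunc ℂ) :=
  (Γ.map ratTilde)ᵀ

/-- A controller `K` internally stabilizes the plant `P` if the block matrix
`[[I, -K],[-P, I]]` is invertible with all entries of its inverse in `RH∞`. -/
def InternallyStabilizes {α : Type*} [Fintype α] [DecidableEq α]
    (P K : Matrix α α (RatFunc ℂ)) : Prop :=
  IsUnit (Matrix.fromBlocks 1 (-K) (-P) 1)
    ∧ ∀ i j, IsRHInf ((Matrix.fromBlocks 1 (-K) (-P) 1)⁻¹ i j)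

noncomputable def tildePolyHom : ℂ[X] →+* ℂ[X] :=
  (Polynomial.compRingHom (-Polynomial.X)).comp (Polynomial.mapRingHom (starRingEnd ℂ))

lemma tildePolyHom_apply (p : ℂ[X]) : tildePolyHom p = polyTilde p := rfl

lemma polyTilde_polyTilde (p : ℂ[X]) : polyTilde (polyTilde p) = p := by
  unfold polyTilde
  rw [Polynomial.map_comp, Polynomial.map_map]
  simp [Polynomial.comp_assoc]

lemma tildePolyHom_injective : Function.Injective tildePolyHom := by
  intro p q h
  rw [tildePolyHom_apply, tildePolyHom_apply] at h
  rw [← polyTilde_polyTilde p, h, polyTilde_polyTilde]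

lemma tildePolyHom_le : nonZeroDivisors ℂ[X] ≤ (nonZeroDivisors ℂ[X]).comap tildePolyHom :=
  nonZeroDivisors_le_comap_nonZeroDivisors_of_injective _ tildePolyHom_injective

noncomputable def tildeHom : RatFunc ℂ →+* RatFunc ℂ :=
  RatFunc.mapRingHom tildePolyHom tildePolyHom_le

lemma tildeHom_apply (f : RatFunc ℂ) : tildeHom f = ratTilde f :=
  RatFunc.map_apply tildePolyHom tildePolyHom_le f

lemma tildeHom_div (p q : ℂ[X]) :
    tildeHom (algebraMap _ _ p / algebraMap _ _ q) =
      algebraMap _ _ (polyTilde p) / algebraMap _ _ (polyTilde q) :=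
  RatFunc.map_apply_div tildePolyHom tildePolyHom_le p q

lemma ratTilde_ratTilde (f : RatFunc ℂ) : ratTilde (ratTilde f) = f := by
  rw [← tildeHom_apply (ratTilde f), ratTilde, tildeHom_div, polyTilde_polyTilde,
    polyTilde_polyTilde, RatFunc.num_div_denom]

lemma mct_eq {α β : Type*} (A : Matrix α β (RatFunc ℂ)) :
    matConjTransfer A = (A.map tildeHom)ᵀ := by
  ext i j
  simp [matConjTransfer, tildeHom_apply]

lemma mct_mct {α β : Type*} (A : Matrix α β (RatFunc ℂ)) :
    matConjTransfer (matConjTransfer A) = A := by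
  ext i j
  simp [matConjTransfer, ratTilde_ratTilde]

lemma mct_mul {n : Type*} [Fintype n] (A B : Matrix n n (RatFunc ℂ)) :
    matConjTransfer (A * B) = matConjTransfer B * matConjTransfer A := by
  rw [mct_eq, mct_eq, mct_eq, Matrix.map_mul, Matrix.transpose_mul]

lemma mct_add {n : Type*} (A B : Matrix n n (RatFunc ℂ)) :
    matConjTransfer (A + B) = matConjTransfer A + matConjTransfer B := by
  ext i j
  simp [mct_eq]

lemma mct_sub {n : Type*} (A B : Matrix n n (RatFunc ℂ)) :
    matConjTransfer (A - B) = matConjTransfer A - matConjTransfer B := by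
  ext i j
  simp [mct_eq]

lemma mct_one {n : Type*} [DecidableEq n] :
    matConjTransfer (1 : Matrix n n (RatFunc ℂ)) = 1 := by
  simp [mct_eq]

lemma mct_J {n : Type*} [DecidableEq n] :
    matConjTransfer (Matrix.fromBlocks 1 0 0 (-1) : Matrix (n ⊕ n) (n ⊕ n) (RatFunc ℂ))
      = Matrix.fromBlocks 1 0 0 (-1) := by
  rw [mct_eq, Matrix.fromBlocks_map, Matrix.fromBlocks_transpose]
  have h : ((-1 : Matrix n n (RatFunc ℂ)).map tildeHom) = -1 := by
    ext i j
    by_cases h : i = j <;> simp [h]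
  rw [h]
  simp

lemma isProper_iff (f : RatFunc ℂ) : IsProper f ↔ f.intDegree ≤ 0 := by
  unfold IsProper RatFunc.intDegree
  rw [Polynomial.degree_eq_natDegree f.denom_ne_zero, ← Polynomial.natDegree_le_iff_degree_le]
  omega

noncomputable def properRing : Subring (RatFunc ℂ) where
  carrier := {f | f.intDegree ≤ 0}
  zero_mem' := by simp
  one_mem' := by simp
  add_mem' := by
    intro a b ha hb
    simp only [Set.mem_ofPred_eq] at *
    by_cases hab : a + b = 0
    · simp [hab]
    by_cases hb0 : b = 0
    · simpa [hb0] using ha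
    exact (RatFunc.intDegree_add_le hb0 hab).trans (max_le ha hb)
  mul_mem' := by
    intro a b ha hb
    simp only [Set.mem_ofPred_eq] at *
    by_cases ha0 : a = 0
    · simp [ha0]
    by_cases hb0 : b = 0
    · simp [hb0]
    rw [RatFunc.intDegree_mul ha0 hb0]
    omega
  neg_mem' := by
    intro a ha
    simpa using ha

lemma mem_properRing (f : RatFunc ℂ) : f ∈ properRing ↔ IsProper f := (isProper_iff f).symm

noncomputable def rhRing : Subring (RatFunc ℂ) where
  carrier := {f | (∀ z : ℂ, f.denom.IsRoot z → z.re < 0) ∧ f ∈ properRing}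
  zero_mem' := by
    refine ⟨?_, properRing.zero_mem⟩
    simp
  one_mem' := by
    refine ⟨?_, properRing.one_mem⟩
    simp
  add_mem' := by
    rintro a b ⟨ha, ha'⟩ ⟨hb, hb'⟩
    refine ⟨fun z hz => ?_, properRing.add_mem ha' hb'⟩
    have := hz.dvd (RatFunc.denom_add_dvd a b)
    rcases Polynomial.root_mul.1 this with h | h
    · exact ha z h
    · exact hb z h
  mul_mem' := by
    rintro a b ⟨ha, ha'⟩ ⟨hb, hb'⟩
    refine ⟨fun z hz => ?_, properRing.mul_mem ha' hb'⟩
    have := hz.dvd (RatFunc.denom_mul_dvd a b)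
    rcases Polynomial.root_mul.1 this with h | h
    · exact ha z h
    · exact hb z h
  neg_mem' := by
    rintro a ⟨ha, ha'⟩
    refine ⟨fun z hz => ?_, properRing.neg_mem ha'⟩
    have h1 : RatFunc.denom (-a) ∣ a.denom := by
      rw [RatFunc.denom_dvd a.denom_ne_zero]
      exact ⟨-a.num, by rw [map_neg, neg_div, RatFunc.num_div_denom]⟩
    exact ha z (hz.dvd h1)

lemma mem_rhRing (f : RatFunc ℂ) : f ∈ rhRing ↔ IsRHInf f := by
  constructor
  · rintro ⟨h1, h2⟩
    exact Or.inr ⟨h1, (mem_properRing f).1 h2⟩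
  · rintro (h | ⟨h1, h2⟩)
    · rw [h]; exact rhRing.zero_mem
    · exact ⟨h1, (mem_properRing f).2 h2⟩

/-- Matrices with entries in a subring. -/
def entrySub (R : Subring (RatFunc ℂ)) (n : Type*) [Fintype n] [DecidableEq n] :
    Subring (Matrix n n (RatFunc ℂ)) where
  carrier := {A | ∀ i j, A i j ∈ R}
  zero_mem' := fun _ _ => R.zero_mem
  one_mem' := by
    intro i j
    rw [Matrix.one_apply]
    split_ifs
    · exact R.one_mem
    · exact R.zero_mem
  add_mem' := fun ha hb i j => R.add_mem (ha i j) (hb i j)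
  neg_mem' := fun ha i j => R.neg_mem (ha i j)
  mul_mem' := by
    intro a b ha hb i j
    rw [Matrix.mul_apply]
    exact R.sum_mem fun k _ => R.mul_mem (ha i k) (hb k j)

lemma det_mem_of_entry {R : Subring (RatFunc ℂ)} {n : Type*} [Fintype n] [DecidableEq n]
    {A : Matrix n n (RatFunc ℂ)} (hA : ∀ i j, A i j ∈ R) : A.det ∈ R := by
  rw [Matrix.det_apply]
  refine R.sum_mem fun σ _ => ?_
  rw [Units.smul_def]
  exact R.zsmul_mem (R.prod_mem fun i _ => hA _ _) _

lemma inv_mem_entry {R : Subring (RatFunc ℂ)} {n : Type*} [Fintype n] [DecidableEq n]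
    {A : Matrix n n (RatFunc ℂ)} (hA : A ∈ entrySub R n) (hd : A.det⁻¹ ∈ R) :
    A⁻¹ ∈ entrySub R n := by
  intro i j
  rw [Matrix.inv_def, Ring.inverse_eq_inv', Matrix.smul_apply, smul_eq_mul,
    Matrix.adjugate_apply]
  refine R.mul_mem hd (det_mem_of_entry fun k l => ?_)
  rw [Matrix.updateRow_apply]
  split_ifs
  · rw [Pi.single_apply]
    split_ifs
    · exact R.one_mem
    · exact R.zero_mem
  · exact hA k l

lemma degree_eq_iff {f : RatFunc ℂ} (hf : f ≠ 0) :
    f.num.degree = f.denom.degree ↔ f.intDegree = 0 := by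
  rw [Polynomial.degree_eq_natDegree (RatFunc.num_ne_zero hf),
    Polynomial.degree_eq_natDegree f.denom_ne_zero, Nat.cast_inj, RatFunc.intDegree]
  omega

lemma fb_eq_one {n : Type*} [DecidableEq n] {a b c d : Matrix n n (RatFunc ℂ)} :
    Matrix.fromBlocks a b c d = 1 ↔ a = 1 ∧ b = 0 ∧ c = 0 ∧ d = 1 := by
  rw [← Matrix.fromBlocks_one, Matrix.fromBlocks_inj]

lemma blocks_inv_mul {n : Type*} [Fintype n] [DecidableEq n]
    {P K M N U V Mh Nh Uh Vh Q Y : Matrix n n (RatFunc ℂ)}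
    (e1 : Vh * M - Uh * N = 1) (e2 : Vh * U - Uh * V = 0)
    (e3 : Mh * N - Nh * M = 0) (e4 : Mh * V - Nh * U = 1)
    (hP1 : P * M = N) (hP2 : Mh * P = Nh) (hM : IsUnit M)
    (hY : V + N * Q = Y) (hYu : IsUnit Y) (hK : K * Y = U + M * Q) :
    Matrix.fromBlocks (M * (Vh + Q * Nh)) (M * (Uh + Q * Mh)) (Y * Nh) (Y * Mh) *
      Matrix.fromBlocks 1 (-K) (-P) 1 = 1 := by
  rw [Matrix.fromBlocks_multiply, ← Matrix.fromBlocks_one]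
  congr 1
  · have h : (Vh - Uh * P) = M⁻¹ := by
      rw [← hM.mul_left_inj, Matrix.nonsing_inv_mul _ ((Matrix.isUnit_iff_isUnit_det _).1 hM),
        sub_mul, mul_assoc, hP1, e1]
    have h2 : M * (Vh - Uh * P) = 1 := by
      rw [h, Matrix.mul_nonsing_inv _ ((Matrix.isUnit_iff_isUnit_det _).1 hM)]
    linear_combination (norm := noncomm_ring) h2 - M * Q * hP2
  · rw [← hYu.mul_left_inj]
    linear_combination (norm := noncomm_ring)
      -M * (Vh + Q * Nh) * hK - M * (Uh + Q * Mh) * hY - M * e2 - M * e1 * Q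
        + M * Q * e4 + M * Q * e3 * Q
  · linear_combination (norm := noncomm_ring) -Y * hP2
  · rw [← hYu.mul_left_inj]
    linear_combination (norm := noncomm_ring)
      -Y * Nh * hK - Y * Mh * hY + Y * e4 + Y * e3 * Q

lemma unitary_iff {n : Type*} [Fintype n] [DecidableEq n]
    {J K M N U V Q X Y : Matrix n n (RatFunc ℂ)}
    (hJ : matConjTransfer J = J) (hX : X = U + M * Q) (hY : Y = V + N * Q)
    (hYu : IsUnit Y) (hK : K * Y = X) :
    matConjTransfer K * J * K = J ↔
      (matConjTransfer U * J * U - matConjTransfer V * J * V)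
        + matConjTransfer Q * (matConjTransfer M * J * U - matConjTransfer N * J * V)
        + matConjTransfer (matConjTransfer M * J * U - matConjTransfer N * J * V) * Q
        + matConjTransfer Q * (matConjTransfer M * J * M - matConjTransfer N * J * N) * Q = 0 := by
  have hL : matConjTransfer (matConjTransfer M * J * U - matConjTransfer N * J * V)
      = matConjTransfer U * J * M - matConjTransfer V * J * N := by
    simp only [mct_sub, mct_mul, mct_mct, hJ, mul_assoc]
  have hexp : (matConjTransfer U * J * U - matConjTransfer V * J * V)
        + matConjTransfer Q * (matConjTransfer M * J * U - matConjTransfer N * J * V)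
        + matConjTransfer (matConjTransfer M * J * U - matConjTransfer N * J * V) * Q
        + matConjTransfer Q * (matConjTransfer M * J * M - matConjTransfer N * J * N) * Q
      = matConjTransfer X * J * X - matConjTransfer Y * J * Y := by
    rw [hL, hX, hY, mct_add, mct_add, mct_mul, mct_mul]
    noncomm_ring
  have hYt : IsUnit (matConjTransfer Y) := by
    obtain ⟨Z, hZ⟩ := hYu.exists_right_inv
    have hZ' : Z * Y = 1 := mul_eq_one_comm.1 hZ
    refine ⟨⟨matConjTransfer Y, matConjTransfer Z, ?_, ?_⟩, rfl⟩
    · rw [← mct_mul, hZ', mct_one]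
    · rw [← mct_mul, hZ, mct_one]
  rw [hexp, sub_eq_zero, ← hK, mct_mul, ← hYu.mul_left_inj, ← hYt.mul_right_inj]
  simp only [mul_assoc]

/-- Parameterization of all stabilizing `(J,J)`-unitary
controllers with well-defined feedthrough: given a doubly coprime factorization
of the plant `P` over `RH∞` satisfying the general Bézout identity, a
2μ×2μ matrix `K` over the rational functions internally stabilizes `P`, is
`(J,J)`-unitary and has all entries proper iff `K = (U + MQ)(V + NQ)⁻¹`, where
`Q` has entries in `RH∞`, `V + NQ` is invertible with `det (V + NQ)` having a
nonzero finite value at infinity (equal numerator and denominator degrees), and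
`Φ + Q~Λ + Λ~Q + Q~ΠQ = 0` with `Φ = U~JU - V~JV`, `Λ = M~JU - N~JV`,
`Π = M~JM - N~JN`. -/
theorem stabilizing_jj_unitary_controllers_parameterization (μ : ℕ)
    (J P M N U V Mh Nh Uh Vh :
      Matrix (Fin μ ⊕ Fin μ) (Fin μ ⊕ Fin μ) (RatFunc ℂ))
    (hJ : J = Matrix.fromBlocks 1 0 0 (-1))
    (hMs : ∀ i j, IsRHInf (M i j)) (hNs : ∀ i j, IsRHInf (N i j))
    (hUs : ∀ i j, IsRHInf (U i j)) (hVs : ∀ i j, IsRHInf (V i j))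
    (hMhs : ∀ i j, IsRHInf (Mh i j)) (hNhs : ∀ i j, IsRHInf (Nh i j))
    (hUhs : ∀ i j, IsRHInf (Uh i j)) (hVhs : ∀ i j, IsRHInf (Vh i j))
    (hM : IsUnit M) (hMh : IsUnit Mh)
    (hPr : P = N * M⁻¹) (hPl : P = Mh⁻¹ * Nh)
    (hBezout : Matrix.fromBlocks Vh (-Uh) (-Nh) Mh *
        Matrix.fromBlocks M U N V = 1)
    (Phi Lam Pim : Matrix (Fin μ ⊕ Fin μ) (Fin μ ⊕ Fin μ) (RatFunc ℂ))
    (hPhi : Phi = matConjTransfer U * J * U - matConjTransfer V * J * V)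
    (hLam : Lam = matConjTransfer M * J * U - matConjTransfer N * J * V)
    (hPim : Pim = matConjTransfer M * J * M - matConjTransfer N * J * N)
    (K : Matrix (Fin μ ⊕ Fin μ) (Fin μ ⊕ Fin μ) (RatFunc ℂ)) :
    (InternallyStabilizes P K ∧ matConjTransfer K * J * K = J
        ∧ (∀ i j, IsProper (K i j)))
      ↔ ∃ Q : Matrix (Fin μ ⊕ Fin μ) (Fin μ ⊕ Fin μ) (RatFunc ℂ),
          (∀ i j, IsRHInf (Q i j))
            ∧ IsUnit (V + N * Q)
            ∧ (V + N * Q).det.num.degree = (V + N * Q).det.denom.degree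
            ∧ Phi + matConjTransfer Q * Lam + matConjTransfer Lam * Q
                + matConjTransfer Q * Pim * Q = 0
            ∧ K = (U + M * Q) * (V + N * Q)⁻¹ := by
  have b1 := hBezout
  have b2 := mul_eq_one_comm.1 hBezout
  rw [Matrix.fromBlocks_multiply, fb_eq_one] at b1 b2
  obtain ⟨e1, e2, e3, e4⟩ := b1
  obtain ⟨f1, f2, f3, f4⟩ := b2
  have hMd := (Matrix.isUnit_iff_isUnit_det _).1 hM
  have hMhd := (Matrix.isUnit_iff_isUnit_det _).1 hMh
  have hP1 : P * M = N := by
    rw [hPr, mul_assoc, Matrix.nonsing_inv_mul _ hMd, mul_one]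
  have hP2 : Mh * P = Nh := by
    rw [hPl, ← mul_assoc, Matrix.mul_nonsing_inv _ hMhd, one_mul]
  have hJt : matConjTransfer J = J := by rw [hJ]; exact mct_J
  subst hPhi hLam hPim
  have key : ∀ A : Matrix (Fin μ ⊕ Fin μ) (Fin μ ⊕ Fin μ) (RatFunc ℂ),
      (∀ i j, IsRHInf (A i j)) ↔ A ∈ entrySub rhRing _ := fun A =>
    forall_congr' fun i => forall_congr' fun j => (mem_rhRing _).symm
  have keyP : ∀ A : Matrix (Fin μ ⊕ Fin μ) (Fin μ ⊕ Fin μ) (RatFunc ℂ),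
      (∀ i j, IsProper (A i j)) ↔ A ∈ entrySub properRing _ := fun A =>
    forall_congr' fun i => forall_congr' fun j => (mem_properRing _).symm
  have hle : entrySub rhRing (Fin μ ⊕ Fin μ) ≤ entrySub properRing _ :=
    fun A hA i j => (hA i j).2
  rw [key] at hMs hNs hUs hVs hMhs hNhs hUhs hVhs
  rw [keyP]
  constructor
  · rintro ⟨⟨hHu, hHs⟩, hKJ, hKp⟩
    have hHd := (Matrix.isUnit_iff_isUnit_det _).1 hHu
    have g1 := Matrix.mul_nonsing_inv _ hHd
    have g2 := Matrix.nonsing_inv_mul _ hHd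
    generalize (Matrix.fromBlocks 1 (-K) (-P) 1)⁻¹ = G at hHs g1 g2
    obtain ⟨a, b, c, d, rfl⟩ : ∃ a b c d, G = Matrix.fromBlocks a b c d :=
      ⟨_, _, _, _, (Matrix.fromBlocks_toBlocks G).symm⟩
    have ha : a ∈ entrySub rhRing _ := (key a).1 fun i j => hHs (.inl i) (.inl j)
    have hb : b ∈ entrySub rhRing _ := (key b).1 fun i j => hHs (.inl i) (.inr j)
    have hc : c ∈ entrySub rhRing _ := (key c).1 fun i j => hHs (.inr i) (.inl j)
    have hd : d ∈ entrySub rhRing _ := (key d).1 fun i j => hHs (.inr i) (.inr j)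
    rw [Matrix.fromBlocks_multiply, fb_eq_one] at g1 g2
    obtain ⟨p1, p2, p3, p4⟩ := g1
    obtain ⟨q1, q2, q3, q4⟩ := g2
    obtain ⟨X, hX⟩ : ∃ X, X = (1 - a) * U + b * V := ⟨_, rfl⟩
    obtain ⟨Y, hY⟩ : ∃ Y, Y = d * V - c * U := ⟨_, rfl⟩
    have hXs : X ∈ entrySub rhRing _ := hX ▸
      add_mem (mul_mem (sub_mem (one_mem _) ha) hUs) (mul_mem hb hVs)
    have hYs : Y ∈ entrySub rhRing _ := hY ▸ sub_mem (mul_mem hd hVs) (mul_mem hc hUs)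
    obtain ⟨Q, hQ⟩ : ∃ Q, Q = Vh * X - Uh * Y := ⟨_, rfl⟩
    have hQs : Q ∈ entrySub rhRing _ := hQ ▸ sub_mem (mul_mem hVhs hXs) (mul_mem hUhs hYs)
    have hKY : K * Y = X := by
      linear_combination (norm := noncomm_ring) K * hY - hX - p2 * V + p1 * U
    have hone : Mh * Y - Nh * X = 1 := by
      linear_combination (norm := noncomm_ring) Mh * hY - Nh * hX + e4
        + Mh * p4 * V - Mh * p3 * U + hP2 * b * V - hP2 * a * U
    have hone' : (Mh - Nh * K) * Y = 1 := by
      linear_combination (norm := noncomm_ring) hone - Nh * hKY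
    have hYX : U + M * Q = X := by
      linear_combination (norm := noncomm_ring) M * hQ + f1 * X + f2 * Y - U * hone
    have hYY : V + N * Q = Y := by
      linear_combination (norm := noncomm_ring) N * hQ + f3 * X + f4 * Y - V * hone
    have hYu : IsUnit Y := ⟨⟨Y, _, mul_eq_one_comm.1 hone', hone'⟩, rfl⟩
    have hYd := (Matrix.isUnit_iff_isUnit_det _).1 hYu
    refine ⟨Q, (key Q).2 hQs, hYY ▸ hYu, ?_, ?_, ?_⟩
    · rw [hYY, degree_eq_iff hYd.ne_zero]
      have d1 := det_mem_of_entry (hle hYs)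
      have d2 : (Mh - Nh * K).det ∈ properRing :=
        det_mem_of_entry (sub_mem (hle hMhs) (mul_mem (hle hNhs) hKp))
      have d3 : (Mh - Nh * K).det * Y.det = 1 := by rw [← Matrix.det_mul, hone', Matrix.det_one]
      have d4 := congrArg RatFunc.intDegree d3
      rw [RatFunc.intDegree_mul (left_ne_zero_of_mul_eq_one d3) hYd.ne_zero,
        RatFunc.intDegree_one] at d4
      change RatFunc.intDegree _ ≤ 0 at d1
      change RatFunc.intDegree _ ≤ 0 at d2
      omega
    · exact (unitary_iff hJt hYX.symm hYY.symm hYu hKY).1 hKJ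
    · rw [hYX, hYY, ← hKY, mul_assoc, Matrix.mul_nonsing_inv _ hYd, mul_one]
  · rintro ⟨Q, hQs, hYu, hdeg, hric, hKe⟩
    rw [key] at hQs
    obtain ⟨Y, hY⟩ : ∃ Y, V + N * Q = Y := ⟨_, rfl⟩
    rw [hY] at hYu hdeg hKe
    have hYd := (Matrix.isUnit_iff_isUnit_det _).1 hYu
    have hKY : K * Y = U + M * Q := by
      rw [hKe, mul_assoc, Matrix.nonsing_inv_mul _ hYd, mul_one]
    have hXs : U + M * Q ∈ entrySub rhRing _ := add_mem hUs (mul_mem hMs hQs)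
    have hYs : Y ∈ entrySub rhRing _ := hY ▸ add_mem hVs (mul_mem hNs hQs)
    refine ⟨?_, (unitary_iff hJt rfl hY.symm hYu hKY).2 hric, ?_⟩
    · have hG := blocks_inv_mul (Vh := Vh) (Uh := Uh) (Mh := Mh) (Nh := Nh)
        (by linear_combination (norm := noncomm_ring) e1)
        (by linear_combination (norm := noncomm_ring) e2)
        (by linear_combination (norm := noncomm_ring) e3)
        (by linear_combination (norm := noncomm_ring) e4) hP1 hP2 hM hY hYu hKY
      refine ⟨⟨⟨_, _, mul_eq_one_comm.1 hG, hG⟩, rfl⟩, ?_⟩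
      rw [Matrix.inv_eq_left_inv hG]
      have m1 := (key _).2 (mul_mem hMs (add_mem hVhs (mul_mem hQs hNhs)))
      have m2 := (key _).2 (mul_mem hMs (add_mem hUhs (mul_mem hQs hMhs)))
      have m3 := (key _).2 (mul_mem hYs hNhs)
      have m4 := (key _).2 (mul_mem hYs hMhs)
      rintro (i | i) (j | j)
      · exact m1 i j
      · exact m2 i j
      · exact m3 i j
      · exact m4 i j
    · rw [hKe]
      refine mul_mem (hle hXs) (inv_mem_entry (hle hYs) ?_)
      change RatFunc.intDegree _ ≤ 0
      rw [RatFunc.intDegree_inv, (degree_eq_iff hYd.ne_zero).1 hdeg]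
      simp
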